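/- Let Γ be a finite simple graph, let G = G(Γ) be the associated right-angled Artin group, and let N be a finitely generated full normal subgroup of G. Then the outer automorphism group Out(N), i.e., the quotient of the automorphism group Aut(N) by the normal subgroup Inn(N) of inner automorphisms, is residually finite. -/

import Mathlib

/-- The defining relators of a right-angled Artin group: commutators of generators
corresponding to adjacent vertices. -/
def raagRels {V : Type} (Γ : SimpleGraph V) : Set (FreeGroup V) :=
  { r | ∃ v w : V, Γ.Adj v w ∧
      r = FreeGroup.of v * FreeGroup.of w * (FreeGroup.of v)⁻¹ * (FreeGroup.of w)⁻¹ }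

/-- The right-angled Artin group associated to the simple graph `Γ`. -/
abbrev RAAG {V : Type} (Γ : SimpleGraph V) : Type := PresentedGroup (raagRels Γ)

/-- The subgroup `G(Δ)` of the RAAG generated by the vertices in the set `S`. -/
def raagVertexSubgroup {V : Type} (Γ : SimpleGraph V) (S : Set V) : Subgroup (RAAG Γ) :=
  Subgroup.closure { x | ∃ v ∈ S, x = PresentedGroup.of (rels := raagRels Γ) v }

/-- A set of vertices `S` is a join of two (nonempty) subgraphs if it can be split into
two nonempty pieces every two vertices of which (one from each piece) are adjacent. -/
def IsJoinOfTwo {V : Type} (Γ : SimpleGraph V) (S : Set V) : Prop :=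
  ∃ A B : Set V, A.Nonempty ∧ B.Nonempty ∧ Disjoint A B ∧ A ∪ B = S ∧
    ∀ a ∈ A, ∀ b ∈ B, Γ.Adj a b

/-- `P : Fin k → Set V` is a join decomposition of `Γ` into join-indecomposable pieces. -/
def IsJoinDecomposition {V : Type} (Γ : SimpleGraph V) {k : ℕ} (P : Fin k → Set V) : Prop :=
  (∀ i, (P i).Nonempty) ∧ (∀ v : V, ∃! i, v ∈ P i) ∧
    (∀ i j, i ≠ j → ∀ a ∈ P i, ∀ b ∈ P j, Γ.Adj a b) ∧
    (∀ i, ¬ IsJoinOfTwo Γ (P i))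

/-- A subgroup `N` of the RAAG is full if for a join decomposition of `Γ` into
join-indecomposable pieces `Γ_1, …, Γ_k`, `N` intersects each `G(Γ_i)` nontrivially. -/
def IsFullSubgroup {V : Type} (Γ : SimpleGraph V) (N : Subgroup (RAAG Γ)) : Prop :=
  ∀ (k : ℕ) (P : Fin k → Set V), IsJoinDecomposition Γ P →
    ∀ i, N ⊓ raagVertexSubgroup Γ (P i) ≠ ⊥

/-- A group is abelian-by-finite if it has an abelian normal subgroup of finite index. -/
def AbelianByFinite (Q : Type) [Group Q] : Prop :=
  ∃ A : Subgroup Q, A.Normal ∧ A.FiniteIndex ∧ ∀ x y : A, x * y = y * x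

/-- A group is finite-by-abelian if it has a finite normal subgroup with abelian quotient,
equivalently a finite normal subgroup containing all commutators. -/
def FiniteByAbelian (Q : Type) [Group Q] : Prop :=
  ∃ F : Subgroup Q, F.Normal ∧ Finite F ∧ ∀ x y : Q, x * y * x⁻¹ * y⁻¹ ∈ F

/-- The subgroup `Inn(G)` of inner automorphisms, i.e. the range of the conjugation
homomorphism `G →* Aut(G)`, is a normal subgroup of `Aut(G)`. -/
instance innNormal (G : Type) [Group G] : (MulAut.conj (G := G)).range.Normal := by
  constructor
  rintro - ⟨g, rfl⟩ f
  refine ⟨f g, ?_⟩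
  ext x
  simp [MulAut.conj, mul_assoc]

/-- The outer automorphism group `Out(G) = Aut(G)/Inn(G)`. -/
abbrev OutAut (G : Type) [Group G] : Type :=
  MulAut G ⧸ (MulAut.conj (G := G)).range

/-- A group is residually finite if every nontrivial element survives in some finite
quotient. -/
def ResiduallyFinite (K : Type) [Group K] : Prop :=
  ∀ k : K, k ≠ 1 →
    ∃ (Q : Type) (instQ : Group Q), letI := instQ
      Finite Q ∧ ∃ φ : K →* Q, φ k ≠ 1

/-!
If an outer automorphism of `N` dies in every finite quotient of `Out(N)`, then a representative `φ`
is a profinite limit of inner automorphisms: along an ultrafilter, `u i * x * (u i)⁻¹ → φ x` for all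
`x ∈ N`, with `u i ∈ N`. Let `N ≤ G(S)` with `S` finite and let `v ∈ S`. If `N ≰ G(st v)`, then a
Fox derivative shows that `N * G(lk v)` has finite index, so some `v ^ k * l` with `k > 0` and
`l ∈ G(lk v)` lies in `N`. Convergence of its conjugates and the Fox derivative modulo `k + 1` force
`u i * ρ(u i)⁻¹` to converge, where `ρ` is the retraction onto `G(st v)`; if `N ≤ G(st v)`, this is
trivial. Intersecting the stars of all `v ∈ S`, we get the convergence of `u i * ρ(u i)⁻¹` to some
`g`, where now `ρ(u i)` centralizes `N`. As RAAGs are residually finite, `φ` is conjugation by `g`,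
which lies in the profinite closure of `N * C(N)`. Finally `G / (N * C(N))` is generated by finitely
many elements whose centralizers have finite index, hence is residually finite. So `g ∈ N * C(N)`
and `φ` is inner.
-/

/-- A crossed homomorphism for the action `α` of `G` on `C`, i.e. a nonabelian 1-cocycle. -/
def IsCrossedHom {G C : Type*} [Group G] [Group C] (α : G →* MulAut C) (D : G → C) : Prop :=
  ∀ a b, D (a * b) = D a * α a (D b)

namespace IsCrossedHom

variable {G C : Type*} [Group G] [Group C] {α : G →* MulAut C} {D : G → C}

theorem map_one (hD : IsCrossedHom α D) : D 1 = 1 := by simpa using hD 1 1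

theorem map_inv (hD : IsCrossedHom α D) (a : G) : D a⁻¹ = (α a⁻¹ (D a))⁻¹ :=
  eq_inv_of_mul_eq_one_left <| by rw [← hD, inv_mul_cancel, hD.map_one]

/-- The subgroup of elements whose value lies in an invariant subgroup `B`. -/
def comap (hD : IsCrossedHom α D) (B : Subgroup C) (hB : ∀ g, ∀ b ∈ B, α g b ∈ B) :
    Subgroup G where
  carrier := {g | D g ∈ B}
  one_mem' := by simp [hD.map_one]
  mul_mem' {a b} ha hb := by
    simpa only [Set.mem_ofPred_eq, hD a b] using mul_mem ha (hB a _ hb)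
  inv_mem' {a} ha := by
    simpa only [Set.mem_ofPred_eq, hD.map_inv] using inv_mem (hB a⁻¹ _ ha)

theorem finiteIndex_comap (hD : IsCrossedHom α D) (B : Subgroup C) [B.FiniteIndex]
    (hB : ∀ g, ∀ b ∈ B, α g b ∈ B) : (hD.comap B hB).FiniteIndex := by
  have inv_mul_mem (a b : G) (h : (D a)⁻¹ * D b ∈ B) : a⁻¹ * b ∈ hD.comap B hB := by
    change D (a⁻¹ * b) ∈ B
    have : D (a⁻¹ * b) = α a⁻¹ ((D a)⁻¹ * D b) := by
      rw [hD, hD.map_inv, _root_.map_mul, _root_.map_inv (α a⁻¹)]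
    exact this ▸ hB _ _ h
  have : Finite (G ⧸ hD.comap B hB) := by
    refine Finite.of_injective (fun q ↦ (QuotientGroup.mk (D q.out) : C ⧸ B)) fun p q hpq ↦ ?_
    simpa using QuotientGroup.eq.2 (inv_mul_mem _ _ (QuotientGroup.eq.1 hpq))
  exact Subgroup.finiteIndex_of_finite_quotient

end IsCrossedHom

/-! ### Finite quotients of groups -/

theorem finite_monoidHom (C P : Type*) [Group C] [Group.FG C] [Group P] [Finite P] :
    Finite (C →* P) := by
  obtain ⟨S, hS⟩ := Group.FG.out (G := C)
  refine Finite.of_injective (β := S → P) (fun φ s ↦ φ s) fun φ ψ h ↦ ?_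
  exact MonoidHom.eq_of_eqOn_dense hS fun x hx ↦ congrFun h ⟨x, hx⟩

theorem exists_characteristic_le {C : Type*} [Group C] [Group.FG C] (H : Subgroup C)
    [H.FiniteIndex] : ∃ K : Subgroup C, K.Characteristic ∧ K.FiniteIndex ∧ K ≤ H := by
  have : Finite (C →* Equiv.Perm (C ⧸ H)) := finite_monoidHom _ _
  refine ⟨⨅ φ : C →* Equiv.Perm (C ⧸ H), φ.ker, ?_, Subgroup.finiteIndex_iInf fun φ ↦ inferInstance,
    (iInf_le _ _).trans (H.normalCore_eq_ker ▸ H.normalCore_le)⟩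
  refine Subgroup.characteristic_iff_le_comap.2 fun e x hx ↦ ?_
  simp only [Subgroup.mem_comap, Subgroup.mem_iInf] at hx ⊢
  exact fun φ ↦ hx (φ.comp e.toMonoidHom)

theorem exists_perm_extending_mul {G : Type*} [Group G] (B : Finset G) (x : G) :
    ∃ σ : Equiv.Perm B, (∀ a : B, x * a ∈ B → (σ a : G) = x * a) ∧
      ∀ a : B, x⁻¹ * a ∈ B → (σ⁻¹ a : G) = x⁻¹ * a := by
  obtain ⟨σ, hσ⟩ := Equiv.Perm.exists_extending_pair
    (fun r : {r : B // x * r ∈ B} ↦ r.1) (fun r ↦ ⟨x * r.1, r.2⟩) Subtype.val_injective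
    fun a b h ↦ Subtype.ext (Subtype.ext (mul_left_cancel (congrArg Subtype.val h)))
  refine ⟨σ, fun a ha ↦ congrArg Subtype.val (hσ ⟨a, ha⟩), fun a ha ↦ ?_⟩
  have : σ⁻¹ a = ⟨x⁻¹ * a, ha⟩ :=
    Equiv.Perm.inv_eq_iff_eq.2 <| by simpa using (hσ ⟨⟨_, ha⟩, by simp⟩).symm
  exact congrArg Subtype.val this

-- The generators act on the suffixes of a reduced word `w` so that `w` moves `1` to itself.
instance residuallyFinite_freeGroup (X : Type*) : Group.ResiduallyFinite (FreeGroup X) := by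
  classical
  refine Group.residuallyFinite_iff_exists_finiteIndex.2 fun w hw ↦ ?_
  let B : Finset (FreeGroup X) := (w.toWord.tails.map FreeGroup.mk).toFinset
  have mk_mem {L} (h : L <:+ w.toWord) : FreeGroup.mk L ∈ B := by
    simpa only [B, List.mem_toFinset, List.mem_map, List.mem_tails] using ⟨L, h, rfl⟩
  choose σ hσ hσ_inv using fun x : X ↦ exists_perm_extending_mul B (FreeGroup.of x)
  let F : FreeGroup X →* Equiv.Perm B := FreeGroup.lift σ
  let e : B := ⟨1, mk_mem (List.nil_suffix)⟩
  have F_mk (L) (h : L <:+ w.toWord) : (F (FreeGroup.mk L) e : FreeGroup X) = FreeGroup.mk L := by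
    induction L with
    | nil => exact congrArg Subtype.val (DFunLike.congr_fun (map_one F) e)
    | cons p L ih =>
      obtain ⟨x, b⟩ := p
      have ih := ih ((List.suffix_cons _ L).trans h)
      cases b with
      | true =>
        have hcons : FreeGroup.mk ((x, true) :: L) = FreeGroup.of x * FreeGroup.mk L := rfl
        have hF : F (FreeGroup.mk ((x, true) :: L)) = σ x * F (FreeGroup.mk L) := by
          rw [hcons, map_mul, FreeGroup.lift_apply_of]
        rw [hF, Equiv.Perm.mul_apply, hσ x _ (by rw [ih]; exact mk_mem h), ih, hcons]
      | false =>
        have hcons : FreeGroup.mk ((x, false) :: L) = (FreeGroup.of x)⁻¹ * FreeGroup.mk L := rfl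
        have hF : F (FreeGroup.mk ((x, false) :: L)) = (σ x)⁻¹ * F (FreeGroup.mk L) := by
          rw [hcons, map_mul, map_inv, FreeGroup.lift_apply_of]
        rw [hF, Equiv.Perm.mul_apply, hσ_inv x _ (by rw [ih]; exact mk_mem h), ih, hcons]
  refine ⟨F.ker, inferInstance, fun hker ↦ hw ?_⟩
  have := F_mk _ List.suffix_rfl
  rw [FreeGroup.mk_toWord, MonoidHom.mem_ker.1 hker] at this
  exact this.symm

theorem exists_finset_mem_range_map {X : Type*} (c : FreeGroup X) :
    ∃ J : Finset X, c ∈ (FreeGroup.map ((↑) : J → X)).range := by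
  classical
  induction c using FreeGroup.induction_on with
  | C1 => exact ⟨∅, one_mem _⟩
  | of x => exact ⟨{x}, FreeGroup.of ⟨x, by simp⟩, by simp⟩
  | inv_of x ih =>
    obtain ⟨J, hJ⟩ := ih
    exact ⟨J, inv_mem hJ⟩
  | mul a b iha ihb =>
    obtain ⟨J, hJ⟩ := iha
    obtain ⟨J', hJ'⟩ := ihb
    have mono {K : Finset X} (h : K ⊆ J ∪ J') {c : FreeGroup X}
        (hc : c ∈ (FreeGroup.map ((↑) : K → X)).range) :
        c ∈ (FreeGroup.map ((↑) : ↥(J ∪ J') → X)).range := by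
      obtain ⟨c, rfl⟩ := hc
      exact ⟨FreeGroup.map (fun x ↦ ⟨x, h x.2⟩) c, FreeGroup.map.comp _ _ c⟩
    exact ⟨J ∪ J', mul_mem (mono Finset.subset_union_left hJ) (mono Finset.subset_union_right hJ')⟩

theorem exists_finset_map_ne_one {X : Type*} {c : FreeGroup X} (hc : c ≠ 1) :
    ∃ J : Finset X, ∀ (Y : Type*) (f : X → Y), Set.InjOn f J → FreeGroup.map f c ≠ 1 := by
  obtain ⟨J, c, rfl⟩ := exists_finset_mem_range_map c
  refine ⟨J, fun Y f hf h ↦ hc ?_⟩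
  rw [FreeGroup.map.comp] at h
  have : Function.Injective (f ∘ ((↑) : J → X)) := hf.injective
  rw [FreeGroup.map_injective this (h.trans (map_one _).symm), map_one]

theorem exists_notMem_eqLocus_sup {G P : Type*} [Group G] [Group P] (f f' : G →* P) {a : G}
    (K : FiniteIndexNormalSubgroup P) (ha : f a * (f' a)⁻¹ ∉ K) :
    ∃ M : FiniteIndexNormalSubgroup G, a ∉ f.eqLocus f' ⊔ M.toSubgroup := by
  refine ⟨K.comap f ⊓ K.comap f', fun hmem ↦ ha ?_⟩
  obtain ⟨l, hl, m, hm, rfl⟩ := Subgroup.mem_sup_of_normal_right.1 hmem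
  have hl : f l = f' l := hl
  have hm : f m * (f' m)⁻¹ ∈ K.toSubgroup := mul_mem hm.1 (inv_mem hm.2)
  rw [← FiniteIndexNormalSubgroup.mem_toSubgroup_iff]
  simpa [hl, mul_assoc] using (inferInstance : K.toSubgroup.Normal).conj_mem _ hm (f' l)

/-- The action of a group on a free group which comes from an action on the basis. -/
def freeGroupAction (G X : Type*) [Group G] [MulAction G X] : G →* MulAut (FreeGroup X) where
  toFun g := FreeGroup.freeGroupCongr (MulAction.toPerm g)
  map_one' := MulEquiv.ext fun c ↦ by
    change FreeGroup.map (fun x : X ↦ (1 : G) • x) c = c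
    simp
  map_mul' a b := MulEquiv.ext fun c ↦ by
    change FreeGroup.map (fun x : X ↦ (a * b) • x) c =
      FreeGroup.map (a • ·) (FreeGroup.map (b • ·) c)
    simp [FreeGroup.map.comp, Function.comp_def, mul_smul]

theorem freeGroupAction_apply {G X : Type*} [Group G] [MulAction G X] (g : G) (c : FreeGroup X) :
    freeGroupAction G X g c = FreeGroup.map (g • ·) c := rfl

theorem IsCrossedHom.exists_finiteIndex_notMem {G C : Type*} [Group G] [Group C] [Group.FG C]
    [Group.ResiduallyFinite C] {α : G →* MulAut C} {D : G → C} (hD : IsCrossedHom α D) {g : G}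
    (hg : D g ≠ 1) : ∃ K : Subgroup G, K.FiniteIndex ∧ g ∉ K := by
  obtain ⟨B, hBg⟩ := Group.exists_finiteIndexNormalSubgroup_notMem _ hg
  obtain ⟨B', hB', _, hle⟩ := exists_characteristic_le B.toSubgroup
  have hinv (a : G) (b : C) (hb : b ∈ B') : α a b ∈ B' :=
    Subgroup.characteristic_iff_le_comap.1 hB' (α a) hb
  exact ⟨hD.comap B' hinv, hD.finiteIndex_comap B' hinv, fun h ↦ hBg (hle h)⟩

section FreeGroupOfQuotient

variable {G : Type*} [Group G] {H : Subgroup G}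

theorem exists_injOn_quotientMapOfLE
    (hH : ∀ a ∉ H, ∃ M : FiniteIndexNormalSubgroup G, a ∉ H ⊔ M.toSubgroup)
    (J : Finset (G ⧸ H)) : ∃ K : Subgroup G, K.FiniteIndex ∧ ∃ hK : H ≤ K,
      Set.InjOn (Subgroup.quotientMapOfLE hK) J := by
  have (p : J × J) : ∃ M : FiniteIndexNormalSubgroup G,
      p.1.1.out⁻¹ * p.2.1.out ∈ H ⊔ M.toSubgroup → p.1.1.out⁻¹ * p.2.1.out ∈ H := by
    by_cases h : p.1.1.out⁻¹ * p.2.1.out ∈ H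
    · exact ⟨FiniteIndexNormalSubgroup.ofSubgroup ⊤, fun _ ↦ h⟩
    · exact (hH _ h).imp fun M hM h' ↦ absurd h' hM
  choose M hM using this
  have : (⨅ p, (M p).toSubgroup).FiniteIndex := Subgroup.finiteIndex_iInf fun _ ↦ inferInstance
  refine ⟨H ⊔ ⨅ p, (M p).toSubgroup, Subgroup.finiteIndex_of_le le_sup_right, le_sup_left,
    fun i hi j hj hij ↦ ?_⟩
  rw [← i.out_eq', ← j.out_eq'] at hij ⊢
  have hmem : i.out⁻¹ * j.out ∈ H ⊔ ⨅ p, (M p).toSubgroup := QuotientGroup.eq (s := H ⊔ _).1 hij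
  exact QuotientGroup.eq.2 (hM (⟨i, hi⟩, ⟨j, hj⟩)
    (sup_le_sup_left (iInf_le (fun p ↦ (M p).toSubgroup) _) H hmem))

theorem IsCrossedHom.map_quotientMapOfLE {D : G → FreeGroup (G ⧸ H)}
    (hD : IsCrossedHom (freeGroupAction G (G ⧸ H)) D) {K : Subgroup G} (hK : H ≤ K) :
    IsCrossedHom (freeGroupAction G (G ⧸ K))
      fun g ↦ FreeGroup.map (Subgroup.quotientMapOfLE hK) (D g) := by
  intro a b
  have : (Subgroup.quotientMapOfLE hK) ∘ (a • ·) = (a • ·) ∘ (Subgroup.quotientMapOfLE hK) := by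
    ext ⟨y⟩
    rfl
  simp only [hD a b, map_mul]
  rw [freeGroupAction_apply, freeGroupAction_apply, FreeGroup.map.comp,
    FreeGroup.map.comp, this]

theorem IsCrossedHom.exists_finiteIndex_notMem_of_separable
    (hH : ∀ a ∉ H, ∃ M : FiniteIndexNormalSubgroup G, a ∉ H ⊔ M.toSubgroup)
    {D : G → FreeGroup (G ⧸ H)} (hD : IsCrossedHom (freeGroupAction G (G ⧸ H)) D) {g : G}
    (hg : D g ≠ 1) : ∃ K : Subgroup G, K.FiniteIndex ∧ g ∉ K := by
  obtain ⟨J, hJ⟩ := exists_finset_map_ne_one hg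
  obtain ⟨K, _, hK, hinj⟩ := exists_injOn_quotientMapOfLE hH J
  exact (hD.map_quotientMapOfLE hK).exists_finiteIndex_notMem (hJ _ _ hinj)

theorem exists_hom_freeGroup_conj {P : Type*} [Group P] (f : G →* P) (p : P)
    (hp : ∀ h ∈ H, Commute p (f h)) : ∃ Ψ : FreeGroup (G ⧸ H) →* P,
      (∀ a : G, Ψ (FreeGroup.of a) = f a * p * (f a)⁻¹) ∧
      ∀ a c, Ψ (freeGroupAction G (G ⧸ H) a c) = f a * Ψ c * (f a)⁻¹ := by
  have hconj (a b : G) (hab : QuotientGroup.leftRel H a b) :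
      f a * p * (f a)⁻¹ = f b * p * (f b)⁻¹ := by
    have hl := hp _ (QuotientGroup.leftRel_apply.1 hab)
    calc f a * p * (f a)⁻¹ = f a * (p * f (a⁻¹ * b)) * (f b)⁻¹ := by simp [mul_assoc]
      _ = f b * p * (f b)⁻¹ := by rw [hl.eq]; simp [mul_assoc]
  let Ψ : FreeGroup (G ⧸ H) →* P := FreeGroup.lift (Quotient.lift _ hconj)
  have Ψ_of (a : G) : Ψ (FreeGroup.of a) = f a * p * (f a)⁻¹ := FreeGroup.lift_apply_of
  refine ⟨Ψ, Ψ_of, fun a ↦ DFunLike.congr_fun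
    (f := Ψ.comp (freeGroupAction G (G ⧸ H) a).toMonoidHom)
    (g := (MulAut.conj (f a)).toMonoidHom.comp Ψ) (FreeGroup.ext_hom _ _ fun q ↦ ?_)⟩
  obtain ⟨b, rfl⟩ := QuotientGroup.mk_surjective q
  change Ψ (FreeGroup.of ((a * b : G) : G ⧸ H)) = _ * Ψ (FreeGroup.of _) * _
  rw [Ψ_of, Ψ_of, map_mul]
  group

end FreeGroupOfQuotient

/-! ### Profinite convergence -/

/-- Convergence of `u` to `g` along the filter `𝓤` in the profinite topology of `G`. -/
def ProfiniteTendsto {ι G : Type*} [Group G] (u : ι → G) (𝓤 : Filter ι) (g : G) : Prop :=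
  ∀ M : FiniteIndexNormalSubgroup G, ∀ᶠ i in 𝓤, (u i : G ⧸ M.toSubgroup) = g

namespace ProfiniteTendsto

variable {ι G : Type*} [Group G] {𝓤 : Filter ι} {u u' : ι → G} {g g' : G}

theorem const (𝓤 : Filter ι) (g : G) : ProfiniteTendsto (fun _ ↦ g) 𝓤 g :=
  fun _ ↦ .of_forall fun _ ↦ rfl

theorem mul (hu : ProfiniteTendsto u 𝓤 g) (hu' : ProfiniteTendsto u' 𝓤 g') :
    ProfiniteTendsto (fun i ↦ u i * u' i) 𝓤 (g * g') := fun M ↦ by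
  filter_upwards [hu M, hu' M] with i hi hi'
  rw [QuotientGroup.mk_mul, hi, hi', QuotientGroup.mk_mul]

theorem inv (hu : ProfiniteTendsto u 𝓤 g) : ProfiniteTendsto (fun i ↦ (u i)⁻¹) 𝓤 g⁻¹ :=
  fun M ↦ (hu M).mono fun i hi ↦ by rw [QuotientGroup.mk_inv, hi, QuotientGroup.mk_inv]

theorem map {G' : Type*} [Group G'] (hu : ProfiniteTendsto u 𝓤 g) (F : G →* G') :
    ProfiniteTendsto (fun i ↦ F (u i)) 𝓤 (F g) := fun M ↦
  (hu (M.comap F)).mono fun i hi ↦ by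
    have hmem : F ((u i)⁻¹ * g) ∈ M.toSubgroup := QuotientGroup.eq.1 hi
    exact QuotientGroup.eq.2 (by rwa [map_mul, map_inv] at hmem)

theorem unique [Group.ResiduallyFinite G] [𝓤.NeBot] (hg : ProfiniteTendsto u 𝓤 g)
    (hg' : ProfiniteTendsto u 𝓤 g') : g = g' := by
  refine inv_mul_eq_one.1 (Group.eq_one_iff_forall_finiteIndexNormalSubroup _ fun M ↦ ?_)
  obtain ⟨i, hi, hi'⟩ := ((hg M).and (hg' M)).exists
  exact QuotientGroup.eq.1 (hi.symm.trans hi')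

theorem map_eq_one {Q : Type*} [Group Q] [Group.ResiduallyFinite Q] [𝓤.NeBot]
    (hu : ProfiniteTendsto u 𝓤 g) (F : G →* Q) (hF : ∀ i, F (u i) = 1) : F g = 1 :=
  (hu.map F).unique (by simpa only [hF] using const 𝓤 1)

theorem eq_conj_of_mul_inv [Group.ResiduallyFinite G] [𝓤.NeBot] {x y : G} {c : ι → G}
    (hy : ProfiniteTendsto (fun i ↦ u i * x * (u i)⁻¹) 𝓤 y)
    (hg : ProfiniteTendsto (fun i ↦ u i * (c i)⁻¹) 𝓤 g) (hc : ∀ i, x * c i = c i * x) :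
    y = g * x * g⁻¹ := by
  refine hy.unique ?_
  have hconj (i : ι) : u i * x * (u i)⁻¹ = u i * (c i)⁻¹ * x * (u i * (c i)⁻¹)⁻¹ := calc
    _ = u i * (c i)⁻¹ * (c i * x) * (u i)⁻¹ := by group
    _ = _ := by rw [← hc]; group
  simpa only [hconj] using (hg.mul (const 𝓤 x)).mul hg.inv

end ProfiniteTendsto

theorem exists_mem_forall_eventually_of_finite {ι α β : Type*} [Preorder α] [Nonempty α]
    [IsCodirectedOrder α] (𝓤 : Ultrafilter ι) {J : Set β} (hJ : J.Finite) {p : β → α → ι → Prop}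
    (hp : ∀ b M M' i, M ≤ M' → p b M i → p b M' i) (h : ∀ M, ∀ᶠ i in 𝓤, ∃ b ∈ J, p b M i) :
    ∃ b ∈ J, ∀ M, ∀ᶠ i in 𝓤, p b M i := by
  let 𝓥 : Ultrafilter α := Ultrafilter.of Filter.atBot
  obtain ⟨b, hb, hbp⟩ := (Ultrafilter.eventually_exists_mem_iff (f := 𝓥)
    (P := fun b M ↦ ∀ᶠ i in 𝓤, p b M i) hJ).1 <|
      .of_forall fun M ↦ (Ultrafilter.eventually_exists_mem_iff hJ).1 (h M)
  refine ⟨b, hb, fun M ↦ ?_⟩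
  obtain ⟨M', hM', hle⟩ :=
    (hbp.and (Ultrafilter.of_le _ (Filter.eventually_le_atBot M))).exists
  exact hM'.mono fun i ↦ hp b M' M i hle

/-! ### Permanence of residual finiteness -/

theorem residuallyFinite_of_injective {G H : Type*} [Group G] [Group H] [Group.ResiduallyFinite H]
    (f : G →* H) (hf : Function.Injective f) : Group.ResiduallyFinite G :=
  Group.residuallyFinite_iff_forall_finiteIndexNormalSubgroup.2 fun g hg ↦ hf <|
    (Group.eq_one_iff_forall_finiteIndexNormalSubroup (f g) fun K ↦ hg (K.comap f)).trans
      (map_one f).symm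

instance residuallyFinite_pi {ι : Type*} (G : ι → Type*) [∀ i, Group (G i)]
    [∀ i, Group.ResiduallyFinite (G i)] : Group.ResiduallyFinite (∀ i, G i) :=
  Group.residuallyFinite_iff_forall_finiteIndexNormalSubgroup.2 fun g hg ↦ funext fun i ↦
    Group.eq_one_iff_forall_finiteIndexNormalSubroup (g i) fun K ↦
      hg (K.comap (Pi.evalMonoidHom G i))

theorem residuallyFinite_of_fg_commGroup (A : Type*) [CommGroup A] [Group.FG A] :
    Group.ResiduallyFinite A := by
  obtain ⟨ι, κ, _, _, p, hp, e, ⟨E⟩⟩ := CommGroup.equiv_free_prod_prod_multiplicative_zmod A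
  have : Group.ResiduallyFinite (Multiplicative ℤ) :=
    residuallyFinite_of_injective (FreeGroup.mulEquivIntOfUnique (α := Unit)).symm.toMonoidHom
      (MulEquiv.injective _)
  have (i : ι) : NeZero (p i ^ e i) := ⟨pow_ne_zero _ (hp i).ne_zero⟩
  have (i : ι) : Finite (Multiplicative (ZMod (p i ^ e i))) :=
    inferInstanceAs (Finite (ZMod (p i ^ e i)))
  exact residuallyFinite_of_injective E.toMonoidHom E.injective

theorem residuallyFinite_of_finiteIndex {G : Type*} [Group G] (H : Subgroup G) [H.FiniteIndex]
    [Group.ResiduallyFinite H] : Group.ResiduallyFinite G := by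
  refine Group.residuallyFinite_iff_forall_finiteIndex.2 fun g hg ↦ ?_
  have hg_one : (⟨g, hg H⟩ : H) = 1 :=
    Group.eq_one_iff_forall_finiteIndexNormalSubroup _ fun K ↦ by
      have : (K.toSubgroup.map H.subtype).FiniteIndex := ⟨by
        rw [Subgroup.index_map_subtype]
        exact mul_ne_zero Subgroup.FiniteIndex.index_ne_zero Subgroup.FiniteIndex.index_ne_zero⟩
      obtain ⟨k, hk, rfl⟩ := hg (K.toSubgroup.map H.subtype)
      exact hk
  exact congrArg Subtype.val hg_one

theorem residuallyFinite_of_finiteIndex_centralizer {Q : Type*} [Group Q] {X : Set Q}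
    (hX : X.Finite) (hX_top : Subgroup.closure X = ⊤)
    (hcent : ∀ x ∈ X, (Subgroup.centralizer {x}).FiniteIndex) : Group.ResiduallyFinite Q := by
  have : Group.FG Q := Group.fg_iff.2 ⟨X, hX_top, hX⟩
  have : (Subgroup.center Q).FiniteIndex := by
    rw [Subgroup.center_eq_infi' hX_top]
    have := hX.to_subtype
    exact Subgroup.finiteIndex_iInf fun x ↦ hcent x x.2
  let : CommGroup (Subgroup.center Q) := { mul_comm := Std.Commutative.comm }
  have : Group.ResiduallyFinite (Subgroup.center Q) :=
    residuallyFinite_of_fg_commGroup (Subgroup.center Q)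
  exact residuallyFinite_of_finiteIndex (Subgroup.center Q)

theorem finiteIndex_sup_of_subset_smul {G : Type*} [Group G] (N H : Subgroup G) [hN : N.Normal]
    {T : Set (G ⧸ H)} (hT : T.Finite) (h : ∀ y : G ⧸ H, ∃ a ∈ N, a • y ∈ T) :
    (N ⊔ H).FiniteIndex := by
  have : Finite T := hT
  have : Finite (G ⧸ (N ⊔ H)) := by
    refine Finite.of_surjective
      (fun t : T ↦ Subgroup.quotientMapOfLE (le_sup_right : H ≤ N ⊔ H) t) fun q ↦ ?_
    obtain ⟨g, rfl⟩ := QuotientGroup.mk_surjective q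
    obtain ⟨a, ha, hag⟩ := h g
    refine ⟨⟨_, hag⟩, QuotientGroup.eq.2 (Subgroup.mem_sup_left ?_)⟩
    simpa [mul_assoc] using hN.conj_mem _ (inv_mem ha) g⁻¹
  exact Subgroup.finiteIndex_of_finite_quotient

theorem eventually_finsupp_apply_eq_zero {Y A : Type*} [Zero A] (F : Y →₀ A) {f : ℤ → Y}
    (hf : Function.Injective f) : ∀ᶠ s in Filter.cofinite, F (f s) = 0 :=
  hf.tendsto_cofinite.eventually (Filter.eventually_cofinite.2 F.hasFiniteSupport)

theorem sum_range_single_apply_zero_ne_zero {Z : Type*} {k : ℕ} (hk : 1 ≤ k) (f : ℕ → Z) :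
    (∑ i ∈ Finset.range k, Finsupp.single (f i) (1 : ZMod (k + 1))) (f 0) ≠ 0 := by
  classical
  simp only [Finsupp.finsetSum_apply, Finsupp.single_apply, Finset.sum_boole, ne_eq,
    ZMod.natCast_eq_zero_iff]
  refine Nat.not_dvd_of_pos_of_lt (Finset.card_pos.2 ⟨0, by simp; omega⟩) ?_
  exact Nat.lt_succ_of_le ((Finset.card_filter_le _ _).trans_eq (Finset.card_range k))

/-! ### Outer automorphisms -/

section OutAut

variable {A : Type} [Group A]

/-- The map `Aut(A) → Aut(A/C)` induced by the quotient by a characteristic subgroup. -/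
def autToAutQuotient (C : Subgroup A) [hC : C.Characteristic] : MulAut A →* MulAut (A ⧸ C) where
  toFun φ := QuotientGroup.congr C C φ (Subgroup.characteristic_iff_map_eq.1 hC φ)
  map_one' := by
    ext ⟨a⟩
    rfl
  map_mul' φ ψ := by
    ext ⟨a⟩
    rfl

theorem autToAutQuotient_conj (C : Subgroup A) [C.Characteristic] (a : A) :
    autToAutQuotient C (MulAut.conj a) = MulAut.conj (a : A ⧸ C) := by
  ext ⟨b⟩
  rfl

/-- The map `Out(A) → Out(A/C)` induced by the quotient by a characteristic subgroup. -/
def outToOutQuotient (C : Subgroup A) [C.Characteristic] : OutAut A →* OutAut (A ⧸ C) :=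
  QuotientGroup.map _ _ (autToAutQuotient C) <| by
    rintro _ ⟨a, rfl⟩
    exact ⟨a, (autToAutQuotient_conj C a).symm⟩

theorem outToOutQuotient_eq_one_iff {C : Subgroup A} [C.Characteristic] {φ : MulAut A} :
    outToOutQuotient C φ = 1 ↔ ∃ u : A, ∀ x : A, (φ x : A ⧸ C) = (u * x * u⁻¹ : A) := by
  have : outToOutQuotient C φ = 1 ↔ ∃ q : A ⧸ C, MulAut.conj q = autToAutQuotient C φ :=
    QuotientGroup.eq_one_iff (autToAutQuotient C φ)
  rw [this, QuotientGroup.mk_surjective.exists]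
  refine exists_congr fun u ↦ ⟨fun h x ↦ (DFunLike.congr_fun h (x : A ⧸ C)).symm, fun h ↦ ?_⟩
  ext ⟨x⟩
  exact (h x).symm

theorem residuallyFinite_outAut_of_profiniteTendsto [Group.FG A]
    (h : ∀ (φ : MulAut A) (𝓤 : Ultrafilter (FiniteIndexNormalSubgroup A))
      (u : FiniteIndexNormalSubgroup A → A),
      (∀ x, ProfiniteTendsto (fun M ↦ u M * x * (u M)⁻¹) 𝓤 (φ x)) →
        φ ∈ (MulAut.conj (G := A)).range) :
    ResiduallyFinite (OutAut A) := by
  intro k hk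
  obtain ⟨φ, rfl⟩ := QuotientGroup.mk_surjective k
  by_contra! hfin
  have hinner (M : FiniteIndexNormalSubgroup A) :
      ∃ u : A, ∀ x : A, (φ x : A ⧸ M.toSubgroup) = (u * x * u⁻¹ : A) := by
    obtain ⟨C, _, _, hCM⟩ := exists_characteristic_le M.toSubgroup
    have : Finite (MulAut (A ⧸ C)) :=
      Finite.of_injective (fun φ : MulAut (A ⧸ C) ↦ (φ : A ⧸ C → A ⧸ C)) DFunLike.coe_injective
    obtain ⟨u, hu⟩ := outToOutQuotient_eq_one_iff.1 <|
      hfin (OutAut (A ⧸ C)) inferInstance inferInstance (outToOutQuotient C)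
    exact ⟨u, fun x ↦ QuotientGroup.eq.2 (hCM (QuotientGroup.eq.1 (hu x)))⟩
  choose u hu using hinner
  have : Nonempty (FiniteIndexNormalSubgroup A) := ⟨.ofSubgroup ⊤⟩
  refine hk ((QuotientGroup.eq_one_iff φ).2 (h φ (Ultrafilter.of Filter.atBot) u fun x M ↦ ?_))
  filter_upwards [Ultrafilter.of_le _ (Filter.eventually_le_atBot M)] with M' hM'
  exact (QuotientGroup.eq.2 (hM' (QuotientGroup.eq.1 (hu M' x)))).symm

end OutAut

/-! ### Generators, retractions and stars -/

namespace RAAG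

variable {V : Type} {Γ : SimpleGraph V} {S T : Set V} {v w : V}

/-- The standard generator of `G(Γ)` attached to the vertex `v`. -/
def gen (Γ : SimpleGraph V) (v : V) : RAAG Γ := PresentedGroup.of v

theorem gen_mul_gen (h : Γ.Adj v w) : gen Γ v * gen Γ w = gen Γ w * gen Γ v := by
  have hrel : gen Γ v * gen Γ w * (gen Γ v)⁻¹ * (gen Γ w)⁻¹ = 1 :=
    PresentedGroup.one_of_mem ⟨v, w, h, rfl⟩
  rwa [mul_inv_eq_one, mul_inv_eq_iff_eq_mul] at hrel

section Lift

variable {H : Type*} [Group H]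

/-- The universal property of `G(Γ)`. -/
def lift (f : V → H) (hf : ∀ v w, Γ.Adj v w → f v * f w = f w * f v) : RAAG Γ →* H :=
  PresentedGroup.toGroup (f := f) <| by
    rintro _ ⟨v, w, h, rfl⟩
    simp [hf v w h]

@[simp]
theorem lift_gen (f : V → H) (hf : ∀ v w, Γ.Adj v w → f v * f w = f w * f v) (v : V) :
    lift f hf (gen Γ v) = f v :=
  PresentedGroup.toGroup.of _

theorem hom_ext {F F' : RAAG Γ →* H} (h : ∀ v, F (gen Γ v) = F' (gen Γ v)) : F = F' :=
  PresentedGroup.ext h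

end Lift

theorem gen_mem (h : v ∈ S) : gen Γ v ∈ raagVertexSubgroup Γ S :=
  Subgroup.subset_closure ⟨v, h, rfl⟩

theorem vertexSubgroup_le {K : Subgroup (RAAG Γ)} (h : ∀ v ∈ S, gen Γ v ∈ K) :
    raagVertexSubgroup Γ S ≤ K := by
  rw [raagVertexSubgroup, Subgroup.closure_le]
  rintro _ ⟨v, hv, rfl⟩
  exact h v hv

theorem closure_range_gen : Subgroup.closure (Set.range (gen Γ)) = ⊤ :=
  PresentedGroup.closure_range_of _

theorem eq_top_of_gen_mem {K : Subgroup (RAAG Γ)} (h : ∀ v, gen Γ v ∈ K) : K = ⊤ := by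
  rw [← top_le_iff, ← closure_range_gen, Subgroup.closure_le]
  rintro _ ⟨v, rfl⟩
  exact h v

theorem vertexSubgroup_mono (h : S ⊆ T) : raagVertexSubgroup Γ S ≤ raagVertexSubgroup Γ T :=
  vertexSubgroup_le fun _ hv ↦ gen_mem (h hv)

@[elab_as_elim]
theorem induction_on {p : RAAG Γ → Prop} (g : RAAG Γ) (one : p 1) (gen : ∀ v, p (gen Γ v))
    (mul : ∀ a b, p a → p b → p (a * b)) (inv : ∀ a, p a → p a⁻¹) : p g := by
  have hg : g ∈ Subgroup.closure (Set.range (RAAG.gen Γ)) := closure_range_gen ▸ Subgroup.mem_top g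
  induction hg using Subgroup.closure_induction with
  | mem _ hx =>
    obtain ⟨v, rfl⟩ := hx
    exact gen v
  | one => exact one
  | mul a b _ _ ha hb => exact mul a b ha hb
  | inv a _ ha => exact inv a ha

theorem exists_mem_vertexSubgroup_finset (g : RAAG Γ) :
    ∃ F : Finset V, g ∈ raagVertexSubgroup Γ (F : Set V) := by
  classical
  induction g using induction_on with
  | one => exact ⟨∅, one_mem _⟩
  | gen v => exact ⟨{v}, gen_mem (by simp)⟩
  | mul a b iha ihb =>
    obtain ⟨F, hF⟩ := iha
    obtain ⟨F', hF'⟩ := ihb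
    refine ⟨F ∪ F', mul_mem (vertexSubgroup_mono ?_ hF) (vertexSubgroup_mono ?_ hF')⟩ <;> simp
  | inv a ih =>
    obtain ⟨F, hF⟩ := ih
    exact ⟨F, inv_mem hF⟩

theorem exists_le_vertexSubgroup_finset {N : Subgroup (RAAG Γ)} (hN : N.FG) :
    ∃ F : Finset V, N ≤ raagVertexSubgroup Γ (F : Set V) := by
  classical
  obtain ⟨X, rfl⟩ := hN
  choose F hF using exists_mem_vertexSubgroup_finset (Γ := Γ)
  refine ⟨X.biUnion F, (Subgroup.closure_le _).2 fun x hx ↦ vertexSubgroup_mono ?_ (hF x)⟩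
  exact_mod_cast Finset.subset_biUnion_of_mem F hx

theorem commute_of_mem_vertexSubgroup
    (hST : ∀ v ∈ S, ∀ w ∈ T, gen Γ v * gen Γ w = gen Γ w * gen Γ v) {a b : RAAG Γ}
    (ha : a ∈ raagVertexSubgroup Γ S) (hb : b ∈ raagVertexSubgroup Γ T) : Commute a b := by
  have hS : raagVertexSubgroup Γ S ≤ Subgroup.centralizer (raagVertexSubgroup Γ T) :=
    vertexSubgroup_le fun v hv c hc ↦ Subgroup.mem_centralizer_singleton_iff.1 <|
      vertexSubgroup_le (fun w hw ↦ Subgroup.mem_centralizer_singleton_iff.2 (hST v hv w hw).symm)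
        hc
  exact (hS ha b hb).symm

open Classical in
/-- The retraction of `G(Γ)` onto `G(S)` which kills the generators outside `S`. -/
noncomputable def ret (Γ : SimpleGraph V) (S : Set V) : RAAG Γ →* RAAG Γ :=
  lift (fun v ↦ if v ∈ S then gen Γ v else 1) fun v w h ↦ by
    by_cases hv : v ∈ S <;> by_cases hw : w ∈ S <;> simp [hv, hw, gen_mul_gen h]

theorem ret_gen_of_mem (h : v ∈ S) : ret Γ S (gen Γ v) = gen Γ v := by simp [ret, h]

theorem ret_gen_of_notMem (h : v ∉ S) : ret Γ S (gen Γ v) = 1 := by simp [ret, h]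

theorem ret_mem (S : Set V) (g : RAAG Γ) : ret Γ S g ∈ raagVertexSubgroup Γ S := by
  have htop : (raagVertexSubgroup Γ S).comap (ret Γ S) = ⊤ := eq_top_of_gen_mem fun v ↦ by
    by_cases h : v ∈ S
    · simpa [ret_gen_of_mem h] using gen_mem h
    · simp [ret_gen_of_notMem h]
  exact Subgroup.mem_comap.1 (htop ▸ Subgroup.mem_top g)

theorem ret_eq_self {g : RAAG Γ} (h : g ∈ raagVertexSubgroup Γ S) : ret Γ S g = g :=
  vertexSubgroup_le (K := (ret Γ S).eqLocus (MonoidHom.id _)) (fun _ ↦ ret_gen_of_mem) h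

theorem ret_ret (S T : Set V) (g : RAAG Γ) : ret Γ S (ret Γ T g) = ret Γ (S ∩ T) g := by
  refine DFunLike.congr_fun (f := (ret Γ S).comp (ret Γ T)) (hom_ext fun v ↦ ?_) g
  by_cases hT : v ∈ T <;> by_cases hS : v ∈ S <;> simp [ret, hS, hT]

/-- The star of `v`, that is `v` together with its neighbours. -/
def star (Γ : SimpleGraph V) (v : V) : Set V := insert v (Γ.neighborSet v)

/-- The subgroup generated by the star of `v`. -/
abbrev starSubgroup (Γ : SimpleGraph V) (v : V) : Subgroup (RAAG Γ) :=
  raagVertexSubgroup Γ (star Γ v)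

/-- The subgroup generated by the link of `v`. -/
abbrev linkSubgroup (Γ : SimpleGraph V) (v : V) : Subgroup (RAAG Γ) :=
  raagVertexSubgroup Γ (Γ.neighborSet v)

theorem commute_gen_of_mem_link {l : RAAG Γ}
    (h : l ∈ linkSubgroup Γ v) : Commute (gen Γ v) l :=
  commute_of_mem_vertexSubgroup (S := {v}) (by rintro _ rfl w hw; exact gen_mul_gen hw)
    (gen_mem rfl) h

theorem link_le_star (v : V) :
    linkSubgroup Γ v ≤ starSubgroup Γ v :=
  vertexSubgroup_mono (Set.subset_insert _ _)

theorem gen_mem_star (v : V) : gen Γ v ∈ starSubgroup Γ v :=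
  gen_mem (Set.mem_insert _ _)

theorem exists_crossedHom {C : Type*} [Group C] (α : RAAG Γ →* MulAut C) (v : V) (c : C)
    (hc : ∀ w, Γ.Adj v w → α (gen Γ w) c = c) :
    ∃ D : RAAG Γ → C, IsCrossedHom α D ∧ D (gen Γ v) = c ∧ ∀ w ≠ v, D (gen Γ w) = 1 := by
  classical
  let F : RAAG Γ →* C ⋊[α] RAAG Γ := lift (fun w ↦ ⟨if w = v then c else 1, gen Γ w⟩)
    fun w w' h ↦ by
      ext
      · by_cases hw : w = v <;> by_cases hw' : w' = v
        · exact absurd (hw.trans hw'.symm) h.ne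
        · simp [hw, hw', hc w' (hw ▸ h)]
        · simp [hw, hw', hc w (hw' ▸ h.symm)]
        · simp [hw, hw']
      · exact gen_mul_gen h
  have hright (g : RAAG Γ) : (F g).right = g :=
    DFunLike.congr_fun (f := SemidirectProduct.rightHom.comp F) (g := MonoidHom.id _)
      (hom_ext fun v ↦ by simp [F]) g
  exact ⟨fun g ↦ (F g).left, fun a b ↦ by simp [hright], by simp [F],
    fun w hw ↦ by simp [F, hw]⟩

theorem gen_smul_coe_one {H : Subgroup (RAAG Γ)} (hH : linkSubgroup Γ v ≤ H) (h : Γ.Adj v w) :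
    gen Γ w • ((1 : RAAG Γ) : RAAG Γ ⧸ H) = (1 : RAAG Γ) := by
  simpa [QuotientGroup.eq] using hH (gen_mem h)

/-! ### Fox derivatives -/

section FoxCalculus

open Finsupp

attribute [local instance] Finsupp.comapSMul Finsupp.comapMulAction Finsupp.comapDistribMulAction

/-- `D` is the Fox derivative with respect to `v`, with values in `A[G(Γ)/H]`. It exists as soon as
`H` contains the subgroup generated by the link of `v`. -/
structure IsFoxDerivative (v : V) {H : Subgroup (RAAG Γ)} {A : Type*} [Ring A]
    (D : RAAG Γ → (RAAG Γ ⧸ H) →₀ A) : Prop where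
  map_mul : ∀ a b, D (a * b) = D a + a • D b
  map_gen_self : D (gen Γ v) = single ((1 : RAAG Γ) : RAAG Γ ⧸ H) 1
  map_gen_of_ne : ∀ w, w ≠ v → D (gen Γ w) = 0

variable {H : Subgroup (RAAG Γ)} {A : Type*} [Ring A]

/-- The action of `G(Γ)` on `A[G(Γ)/H]`, written multiplicatively. -/
noncomputable def foxAction (H : Subgroup (RAAG Γ)) (A : Type*) [Ring A] :
    RAAG Γ →* MulAut (Multiplicative ((RAAG Γ ⧸ H) →₀ A)) :=
  (MulAutMultiplicative _).symm.toMonoidHom.comp (DistribMulAction.toAddAut _ _)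

theorem foxAction_apply (g : RAAG Γ) (x : Multiplicative ((RAAG Γ ⧸ H) →₀ A)) :
    foxAction H A g x = Multiplicative.ofAdd (g • x.toAdd) := rfl

theorem exists_isFoxDerivative (A : Type*) [Ring A] (hH : linkSubgroup Γ v ≤ H) :
    ∃ D : RAAG Γ → (RAAG Γ ⧸ H) →₀ A, IsFoxDerivative v D := by
  obtain ⟨D, hD, hDv, hDw⟩ := exists_crossedHom (foxAction H A) v
    (Multiplicative.ofAdd (single ((1 : RAAG Γ) : RAAG Γ ⧸ H) 1)) fun w h ↦ by
      simp [foxAction_apply, gen_smul_coe_one hH h]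
  exact ⟨fun g ↦ (D g).toAdd, fun a b ↦ congrArg Multiplicative.toAdd (hD a b),
    congrArg Multiplicative.toAdd hDv, fun w hw ↦ congrArg Multiplicative.toAdd (hDw w hw)⟩

namespace IsFoxDerivative

variable {D : RAAG Γ → (RAAG Γ ⧸ H) →₀ A}

theorem isCrossedHom (hD : IsFoxDerivative v D) :
    IsCrossedHom (foxAction H A) fun g ↦ Multiplicative.ofAdd (D g) :=
  fun a b ↦ congrArg Multiplicative.ofAdd (hD.map_mul a b)

theorem map_one (hD : IsFoxDerivative v D) : D 1 = 0 := hD.isCrossedHom.map_one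

theorem map_mul_apply (hD : IsFoxDerivative v D) (a b : RAAG Γ) (y : RAAG Γ ⧸ H) :
    D (a * b) y = D a y + D b (a⁻¹ • y) := by
  rw [hD.map_mul, Finsupp.add_apply, Finsupp.comapSMul_apply]

theorem map_inv_apply (hD : IsFoxDerivative v D) (a : RAAG Γ) (y : RAAG Γ ⧸ H) :
    D a⁻¹ y = -D a (a • y) := by
  have h : D a⁻¹ = -(a⁻¹ • D a) := hD.isCrossedHom.map_inv a
  rw [h, Finsupp.neg_apply, Finsupp.comapSMul_apply, inv_inv]

/-- The subgroup on which a Fox derivative vanishes. -/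
noncomputable def ker (hD : IsFoxDerivative v D) : Subgroup (RAAG Γ) :=
  hD.isCrossedHom.comap ⊥ <| by simp

theorem mem_ker (hD : IsFoxDerivative v D) {g : RAAG Γ} : g ∈ hD.ker ↔ D g = 0 :=
  Subgroup.mem_bot

theorem map_mul_of_mem_ker (hD : IsFoxDerivative v D) (a : RAAG Γ) {m : RAAG Γ}
    (hm : m ∈ hD.ker) : D (a * m) = D a := by
  rw [hD.map_mul, hD.mem_ker.1 hm, smul_zero, add_zero]

theorem finiteIndex_ker [Finite A] [H.FiniteIndex] (hD : IsFoxDerivative v D) :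
    hD.ker.FiniteIndex := by
  have : Finite (Multiplicative ((RAAG Γ ⧸ H) →₀ A)) :=
    Finite.of_injective (α := (RAAG Γ ⧸ H) →₀ A) _ DFunLike.coe_injective
  exact hD.isCrossedHom.finiteIndex_comap ⊥ _

theorem link_le_ker (hD : IsFoxDerivative v D) :
    linkSubgroup Γ v ≤ hD.ker :=
  vertexSubgroup_le fun _ hw ↦ hD.mem_ker.2 (hD.map_gen_of_ne _ hw.ne')

theorem map_gen_pow (hD : IsFoxDerivative v D) (k : ℕ) :
    D (gen Γ v ^ k) = ∑ i ∈ Finset.range k, single (((gen Γ v ^ i : RAAG Γ)) : RAAG Γ ⧸ H) 1 := by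
  induction k with
  | zero => simp [hD.map_one]
  | succ k ih =>
    rw [pow_succ, hD.map_mul, ih, hD.map_gen_self, Finset.sum_range_succ,
      Finsupp.comapSMul_single, MulAction.Quotient.smul_coe, smul_eq_mul, mul_one]

theorem exists_mem_closure_apply_ne_zero (hD : IsFoxDerivative v D) {X : Set (RAAG Γ)}
    {g : RAAG Γ} (hg : g ∈ Subgroup.closure X) {y : RAAG Γ ⧸ H} (hy : D g y ≠ 0) :
    ∃ a ∈ Subgroup.closure X, ∃ x ∈ X, D x (a⁻¹ • y) ≠ 0 := by
  induction hg using Subgroup.closure_induction generalizing y with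
  | mem x hx => exact ⟨1, one_mem _, x, hx, by simpa using hy⟩
  | one => simp [hD.map_one] at hy
  | mul a b ha _ iha ihb =>
    by_cases hay : D a y = 0
    · rw [hD.map_mul_apply, hay, zero_add] at hy
      obtain ⟨c, hc, x, hx, h⟩ := ihb hy
      exact ⟨a * c, mul_mem ha hc, x, hx, by rwa [mul_inv_rev, mul_smul]⟩
    · exact iha hay
  | inv a ha iha =>
    rw [hD.map_inv_apply, neg_ne_zero] at hy
    obtain ⟨c, hc, x, hx, h⟩ := iha hy
    exact ⟨a⁻¹ * c, mul_mem (inv_mem ha) hc, x, hx, by simpa [mul_smul] using h⟩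

theorem exists_mem_vertexSubgroup_coe_eq (hD : IsFoxDerivative v D) {g : RAAG Γ}
    (hg : g ∈ raagVertexSubgroup Γ S) {y : RAAG Γ ⧸ H} (hy : D g y ≠ 0) :
    ∃ a ∈ raagVertexSubgroup Γ S, (a : RAAG Γ ⧸ H) = y := by
  obtain ⟨a, ha, _, ⟨w, -, rfl⟩, h⟩ := hD.exists_mem_closure_apply_ne_zero hg hy
  refine ⟨a, ha, ?_⟩
  change D (gen Γ w) (a⁻¹ • y) ≠ 0 at h
  rcases eq_or_ne w v with rfl | hw
  · rw [hD.map_gen_self, Finsupp.single_apply_ne_zero] at h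
    rw [inv_smul_eq_iff.1 h.1, MulAction.Quotient.smul_coe, smul_eq_mul, mul_one]
  · simp [hD.map_gen_of_ne w hw] at h

/-- If `u x u⁻¹ ≡ y` as far as `D` can see, where `x = v ^ k * l`, then projecting
`D u + u • D x = D y + y • D u` to the set of `y`-orbits leaves `u • D x ≡ D y`. The left-hand side
is a sum of `k` basis elements, so it is not zero modulo `k + 1`. -/
theorem exists_zpow_mul_apply_ne_zero {k : ℕ} (hk : 1 ≤ k)
    {D : RAAG Γ → (RAAG Γ ⧸ H) →₀ ZMod (k + 1)} (hD : IsFoxDerivative v D) {u l y : RAAG Γ}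
    (hl : l ∈ linkSubgroup Γ v)
    (huy : D (u * (gen Γ v ^ k * l)) = D (y * u)) :
    ∃ t : ℤ, D y ((y ^ t * u : RAAG Γ) : RAAG Γ ⧸ H) ≠ 0 := by
  classical
  let π : RAAG Γ ⧸ H → MulAction.orbitRel.Quotient (Subgroup.zpowers y) (RAAG Γ ⧸ H) :=
    Quotient.mk _
  have hπ : π ∘ (y • ·) = π :=
    funext fun z ↦ Quotient.sound ⟨⟨y, Subgroup.mem_zpowers y⟩, rfl⟩
  have hsum : mapDomain π (D y) =
      ∑ i ∈ Finset.range k, single (π (u * gen Γ v ^ i : RAAG Γ)) 1 := by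
    rw [hD.map_mul u, hD.map_mul_of_mem_ker _ (hD.link_le_ker hl), hD.map_mul y,
      hD.map_gen_pow] at huy
    have := congrArg (mapDomain π) huy
    rw [mapDomain_add, mapDomain_add, Finsupp.comapSMul_def y, ← mapDomain_comp, hπ,
      add_comm (mapDomain π (D u)), add_right_cancel_iff] at this
    simp [← this, Finset.smul_sum, mapDomain_finsetSum]
  have hne : mapDomain π (D y) (π u) ≠ 0 := by
    simpa [hsum] using sum_range_single_apply_zero_ne_zero hk fun i ↦ π (u * gen Γ v ^ i : RAAG Γ)
  obtain ⟨z, hz, hzu⟩ := Finset.mem_image.1 (mapDomain_support (Finsupp.mem_support_iff.2 hne))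
  obtain ⟨⟨_, t, rfl⟩, ht⟩ := Quotient.exact hzu
  have hz' : z = ((y ^ t * u : RAAG Γ) : RAAG Γ ⧸ H) := ht.symm
  exact ⟨t, hz' ▸ Finsupp.mem_support_iff.1 hz⟩

end IsFoxDerivative

theorem exists_finite_support_subset_coe_image (v : V) (g : RAAG Γ) : ∃ J : Set (RAAG Γ), J.Finite ∧
    ∀ (H : Subgroup (RAAG Γ)) (A : Type) [Ring A] (D : RAAG Γ → (RAAG Γ ⧸ H) →₀ A),
      IsFoxDerivative v D → ∀ y, D g y ≠ 0 → ∃ j ∈ J, (j : RAAG Γ ⧸ H) = y := by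
  induction g using induction_on with
  | one => exact ⟨∅, Set.finite_empty, fun H A _ D hD y hy ↦ by simp [hD.map_one] at hy⟩
  | gen w =>
    refine ⟨{1}, Set.finite_singleton 1, fun H A _ D hD y hy ↦ ⟨1, rfl, ?_⟩⟩
    rcases eq_or_ne w v with rfl | hw
    · rw [hD.map_gen_self, Finsupp.single_apply_ne_zero] at hy
      exact hy.1.symm
    · simp [hD.map_gen_of_ne w hw] at hy
  | mul a b iha ihb =>
    obtain ⟨J, hJ, hJa⟩ := iha
    obtain ⟨K, hK, hKb⟩ := ihb
    refine ⟨J ∪ (a * ·) '' K, hJ.union (hK.image _), fun H A _ D hD y hy ↦ ?_⟩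
    by_cases hay : D a y = 0
    · rw [hD.map_mul_apply, hay, zero_add] at hy
      obtain ⟨j, hj, hjy⟩ := hKb H A D hD _ hy
      exact ⟨a * j, .inr ⟨j, hj, rfl⟩, by rw [← smul_inv_smul a y, ← hjy]; rfl⟩
    · obtain ⟨j, hj, hjy⟩ := hJa H A D hD y hay
      exact ⟨j, .inl hj, hjy⟩
  | inv a iha =>
    obtain ⟨J, hJ, hJa⟩ := iha
    refine ⟨(a⁻¹ * ·) '' J, hJ.image _, fun H A _ D hD y hy ↦ ?_⟩
    rw [hD.map_inv_apply, neg_ne_zero] at hy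
    obtain ⟨j, hj, hjy⟩ := hJa H A D hD _ hy
    exact ⟨a⁻¹ * j, ⟨j, hj, rfl⟩, by rw [← inv_smul_smul a y, ← hjy]; rfl⟩

theorem mem_star_of_mul_gen_pow {d : ℕ} (hd : 1 ≤ d) {n l : RAAG Γ}
    (hl : l ∈ linkSubgroup Γ v)
    (h : n * gen Γ v ^ d = gen Γ v ^ d * l * n) : n ∈ starSubgroup Γ v := by
  obtain ⟨D, hD⟩ := exists_isFoxDerivative (v := v) (ZMod (d + 1)) le_rfl
  have hy : gen Γ v ^ d * l ∈ starSubgroup Γ v :=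
    mul_mem (pow_mem (gen_mem_star v) d) (link_le_star v hl)
  obtain ⟨t, ht⟩ := hD.exists_zpow_mul_apply_ne_zero hd (u := n) (l := 1)
    (y := gen Γ v ^ d * l) (one_mem _) (by rw [mul_one, h])
  obtain ⟨a, ha, hat⟩ := hD.exists_mem_vertexSubgroup_coe_eq hy ht
  have hmem := mul_mem ha (link_le_star v (QuotientGroup.eq.1 hat))
  rw [mul_inv_cancel_left] at hmem
  exact (Subgroup.mul_mem_cancel_left _ (zpow_mem hy t)).1 hmem

theorem gen_zpow_mem_link {s : ℤ} (h : gen Γ v ^ s ∈ linkSubgroup Γ v) :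
    s = 0 := by
  let F : RAAG Γ →* Multiplicative ℤ := lift (fun _ ↦ Multiplicative.ofAdd 1) fun _ _ _ ↦ rfl
  have hs : gen Γ v ^ s = 1 := by
    rw [← ret_eq_self h, map_zpow, ret_gen_of_notMem (by simp), one_zpow]
  simpa [F, ← ofAdd_zsmul] using congrArg F hs

section Orbit

open scoped commutatorElement

variable {n : RAAG Γ}

theorem injective_gen_zpow_coe :
    Function.Injective fun s : ℤ ↦ ((gen Γ v ^ s : RAAG Γ) : RAAG Γ ⧸ linkSubgroup Γ v) := by
  intro s s' h
  have hmem := QuotientGroup.eq.1 h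
  rw [← zpow_neg, ← zpow_add] at hmem
  have := gen_zpow_mem_link hmem
  omega

theorem injective_conj_gen_zpow_coe (hn : n ∉ starSubgroup Γ v) :
    Function.Injective fun s : ℤ ↦ ((gen Γ v ^ s * n⁻¹ * gen Γ v ^ (-s) : RAAG Γ) :
      RAAG Γ ⧸ linkSubgroup Γ v) := by
  intro s s' h
  wlog hlt : s' < s generalizing s s'
  · by_contra hne
    exact hne (this h.symm (by omega)).symm
  have hl := QuotientGroup.eq.1 h.symm
  set l := (gen Γ v ^ s' * n⁻¹ * gen Γ v ^ (-s'))⁻¹ * (gen Γ v ^ s * n⁻¹ * gen Γ v ^ (-s))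
    with hl_def
  obtain ⟨d, hd⟩ := Int.eq_ofNat_of_zero_le (sub_nonneg.2 hlt.le)
  refine absurd (mem_star_of_mul_gen_pow (d := d) (by omega) hl ?_) hn
  have hcomm : gen Γ v ^ (-s') * l * gen Γ v ^ s = gen Γ v ^ (s - s') * l := by
    rw [mul_assoc, ← ((commute_gen_of_mem_link hl).zpow_left s).eq, ← mul_assoc, ← zpow_add,
      neg_add_eq_sub]
  rw [← zpow_natCast, ← hd, ← hcomm, hl_def]
  group

variable {A : Type} [Ring A] {D : RAAG Γ → (RAAG Γ ⧸ linkSubgroup Γ v) →₀ A}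

theorem IsFoxDerivative.eventually_map_commutator_apply (hD : IsFoxDerivative v D)
    (hn : n ∉ starSubgroup Γ v) :
    ∀ᶠ s : ℤ in Filter.cofinite,
      D ⁅gen Γ v ^ s, n⁆ (1 : RAAG Γ) = D (gen Γ v ^ s) (1 : RAAG Γ) := by
  have hpow := eventually_finsupp_apply_eq_zero (D n) (injective_gen_zpow_coe.comp neg_injective)
  have hconj := eventually_finsupp_apply_eq_zero (D n)
    ((MulAction.injective n).comp (injective_conj_gen_zpow_coe hn))
  filter_upwards [hpow, hconj] with s hs hs'
  set x := gen Γ v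
  have hstar : D (x ^ s) (x ^ s * n⁻¹ * x ^ (-s) : RAAG Γ) = 0 := by
    by_contra hne
    have hxs (i : ℤ) : x ^ i ∈ starSubgroup Γ v := zpow_mem (gen_mem_star v) i
    obtain ⟨a, ha, hax⟩ := hD.exists_mem_vertexSubgroup_coe_eq (hxs s) hne
    have hmem := mul_mem ha (link_le_star v (QuotientGroup.eq.1 hax))
    rw [mul_inv_cancel_left, Subgroup.mul_mem_cancel_right _ (hxs _),
      Subgroup.mul_mem_cancel_left _ (hxs _), inv_mem_iff] at hmem
    exact hn hmem
  have hx : x ^ s • (x ^ s * n)⁻¹ • ((1 : RAAG Γ) : RAAG Γ ⧸ linkSubgroup Γ v) =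
      (x ^ s * n⁻¹ * x ^ (-s) : RAAG Γ) := by
    simp [mul_assoc, x]
  have hn' : n • (x ^ s * n * (x ^ s)⁻¹)⁻¹ • ((1 : RAAG Γ) : RAAG Γ ⧸ linkSubgroup Γ v) =
      n • ((x ^ s * n⁻¹ * x ^ (-s) : RAAG Γ) : RAAG Γ ⧸ linkSubgroup Γ v) := by
    simp [mul_assoc, x]
  rw [commutatorElement_def, hD.map_mul_apply, hD.map_mul_apply, hD.map_mul_apply,
    hD.map_inv_apply, hD.map_inv_apply, hx, hn', hstar]
  simp_all

theorem IsFoxDerivative.map_gen_zpow_apply_one (hD : IsFoxDerivative v D) (s : ℤ) :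
    D (gen Γ v ^ s) (1 : RAAG Γ) = if 0 < s then 1 else 0 := by
  classical
  have hsucc (i : ℤ) : D (gen Γ v ^ (i + 1)) (1 : RAAG Γ) =
      D (gen Γ v ^ i) (1 : RAAG Γ) + if i = 0 then 1 else 0 := by
    have hi : (gen Γ v ^ i)⁻¹ • ((1 : RAAG Γ) : RAAG Γ ⧸ linkSubgroup Γ v) =
        (gen Γ v ^ (-i) : RAAG Γ) := by simp
    have hzero :
        ((gen Γ v ^ (-i) : RAAG Γ) : RAAG Γ ⧸ linkSubgroup Γ v) = (1 : RAAG Γ) ↔ i = 0 := by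
      rw [← zpow_zero (gen Γ v), injective_gen_zpow_coe.eq_iff, neg_eq_zero]
    rw [zpow_add_one, hD.map_mul_apply, hD.map_gen_self, hi, single_apply]
    simp only [eq_comm (a := ((1 : RAAG Γ) : RAAG Γ ⧸ linkSubgroup Γ v)), hzero]
  induction s with
  | zero => simp [hD.map_one]
  | succ i ih =>
    rw [hsucc, ih]
    split_ifs <;> first | omega | simp
  | pred i ih =>
    have := hsucc (-i - 1)
    rw [sub_add_cancel, ih] at this
    rw [if_neg (by omega), if_neg (by omega), add_zero] at this
    rw [← this, if_neg (by omega)]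

theorem IsFoxDerivative.exists_mem_apply_ne_zero [Nontrivial A] (hD : IsFoxDerivative v D)
    {N : Subgroup (RAAG Γ)} [hN : N.Normal] (hnN : n ∈ N) (hn : n ∉ starSubgroup Γ v)
    (g : RAAG Γ) : ∃ m ∈ N, D m g ≠ 0 := by
  by_contra! hzero
  have hconst : ∀ᶠ s : ℤ in Filter.cofinite, D (gen Γ v ^ s) (1 : RAAG Γ) = -D g g := by
    have hfin := eventually_finsupp_apply_eq_zero (D g)
      ((MulAction.injective (g * n)).comp (injective_conj_gen_zpow_coe hn))
    filter_upwards [hD.eventually_map_commutator_apply hn, hfin] with s hs hs'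
    have hc : ⁅gen Γ v ^ s, n⁆ ∈ N := N.mul_mem (hN.conj_mem n hnN _) (inv_mem hnN)
    have hconj := hzero _ (hN.conj_mem _ hc g)
    have hg : g⁻¹ • (g : RAAG Γ ⧸ linkSubgroup Γ v) = (1 : RAAG Γ) := by simp
    have hgc : g • (g * ⁅gen Γ v ^ s, n⁆)⁻¹ • (g : RAAG Γ ⧸ linkSubgroup Γ v) =
        (g * n) • ((gen Γ v ^ s * n⁻¹ * gen Γ v ^ (-s) : RAAG Γ) : RAAG Γ ⧸ linkSubgroup Γ v) := by
      simp [commutatorElement_def, mul_assoc]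
    rw [hD.map_mul_apply, hD.map_mul_apply, hD.map_inv_apply, hgc, hg, hs] at hconj
    simp only [Function.comp_apply] at hs'
    rwa [hs', neg_zero, add_zero, add_comm, add_eq_zero_iff_eq_neg] at hconj
  rw [Int.cofinite_eq, Filter.eventually_sup] at hconst
  obtain ⟨s, hs, hs_nonpos⟩ := (hconst.1.and (Filter.eventually_le_atBot 0)).exists
  obtain ⟨s', hs', hs'_pos⟩ := (hconst.2.and (Filter.eventually_gt_atTop 0)).exists
  rw [hD.map_gen_zpow_apply_one, if_neg hs_nonpos.not_gt] at hs
  rw [hD.map_gen_zpow_apply_one, if_pos hs'_pos, ← hs] at hs'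
  exact one_ne_zero hs'

end Orbit

theorem finiteIndex_sup_link (N : Subgroup (RAAG Γ)) [N.Normal] (hfg : N.FG)
    (hN : ¬ N ≤ starSubgroup Γ v) : (N ⊔ linkSubgroup Γ v).FiniteIndex := by
  obtain ⟨n, hnN, hn⟩ := SetLike.not_le_iff_exists.1 hN
  obtain ⟨D, hD⟩ := exists_isFoxDerivative (v := v) ℤ le_rfl
  obtain ⟨X, hX⟩ := hfg
  refine finiteIndex_sup_of_subset_smul N _
    (X.finite_toSet.biUnion fun x _ ↦ (D x).hasFiniteSupport) fun y ↦ ?_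
  obtain ⟨g, rfl⟩ := QuotientGroup.mk_surjective y
  obtain ⟨m, hmN, hm⟩ := hD.exists_mem_apply_ne_zero hnN hn g
  obtain ⟨a, ha, x, hx, hax⟩ := hD.exists_mem_closure_apply_ne_zero (hX ▸ hmN) hm
  exact ⟨a⁻¹, inv_mem (hX ▸ ha), Set.mem_biUnion hx hax⟩

end FoxCalculus

/-! ### Residual finiteness of RAAGs -/

section ResiduallyFinite

/-- The retraction `ret`, with codomain `G(S)`. -/
noncomputable def retCod (Γ : SimpleGraph V) (S : Set V) : RAAG Γ →* raagVertexSubgroup Γ S :=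
  (ret Γ S).codRestrict _ (ret_mem S)

theorem link_le_comap_ret (S : Set V) (v : V) :
    linkSubgroup Γ v ≤ (linkSubgroup Γ v).comap (ret Γ S) :=
  vertexSubgroup_le fun w hw ↦ by
    by_cases h : w ∈ S
    · simpa [ret_gen_of_mem h] using gen_mem hw
    · simp [ret_gen_of_notMem h]

theorem exists_ret_insert_eq (hv : v ∉ S)
    {D : RAAG Γ → FreeGroup (RAAG Γ ⧸ (linkSubgroup Γ v).comap (ret Γ S))}
    (hD : IsCrossedHom (freeGroupAction _ _) D)
    (hDv : D (gen Γ v) = FreeGroup.of ((1 : RAAG Γ) : RAAG Γ ⧸ _))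
    (hDw : ∀ w ≠ v, D (gen Γ w) = 1) :
    ∃ Ψ : FreeGroup (RAAG Γ ⧸ (linkSubgroup Γ v).comap (ret Γ S)) →* RAAG Γ,
      ∀ g, ret Γ (insert v S) g = Ψ (D g) * ret Γ S g := by
  obtain ⟨Ψ, Ψ_of, Ψ_action⟩ := exists_hom_freeGroup_conj (ret Γ S) (gen Γ v)
    (H := (linkSubgroup Γ v).comap (ret Γ S)) fun _ h ↦ commute_gen_of_mem_link h
  let F : RAAG Γ →* RAAG Γ :=
    { toFun := fun g ↦ Ψ (D g) * ret Γ S g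
      map_one' := by simp [hD.map_one]
      map_mul' := fun a b ↦ by simp [hD a b, Ψ_action, mul_assoc] }
  refine ⟨Ψ, DFunLike.congr_fun (f := ret Γ (insert v S)) (g := F) (hom_ext fun w ↦ ?_)⟩
  change _ = Ψ (D (gen Γ w)) * ret Γ S (gen Γ w)
  by_cases hw : w = v
  · subst hw
    simp [hDv, Ψ_of, ret_gen_of_notMem hv, ret_gen_of_mem (Set.mem_insert w S)]
  · rw [hDw w hw, map_one, one_mul]
    by_cases hS : w ∈ S
    · rw [ret_gen_of_mem hS, ret_gen_of_mem (Set.mem_insert_of_mem v hS)]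
    · rw [ret_gen_of_notMem hS, ret_gen_of_notMem (by simp [hw, hS])]

theorem exists_notMem_comap_ret_sup [Group.ResiduallyFinite (raagVertexSubgroup Γ S)] (v : V)
    (a : RAAG Γ) (ha : a ∉ (linkSubgroup Γ v).comap (ret Γ S)) :
    ∃ M : FiniteIndexNormalSubgroup (RAAG Γ),
      a ∉ (linkSubgroup Γ v).comap (ret Γ S) ⊔ M.toSubgroup := by
  have hle : raagVertexSubgroup Γ (Γ.neighborSet v ∩ S) ≤ raagVertexSubgroup Γ S :=
    vertexSubgroup_mono Set.inter_subset_right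
  let f := retCod Γ S
  let f' := (Subgroup.inclusion hle).comp (retCod Γ (Γ.neighborSet v ∩ S))
  have hf : (linkSubgroup Γ v).comap (ret Γ S) = f.eqLocus f' := by
    ext b
    have : f b = f' b ↔ ret Γ S b = ret Γ (Γ.neighborSet v) (ret Γ S b) := by
      rw [ret_ret]
      exact Subtype.ext_iff
    exact (⟨fun h ↦ (ret_eq_self h).symm, fun h ↦ h ▸ ret_mem _ _⟩ :
      ret Γ S b ∈ linkSubgroup Γ v ↔ _).trans this.symm
  rw [hf] at ha ⊢
  obtain ⟨K, hK⟩ := Group.exists_finiteIndexNormalSubgroup_notMem (f a * (f' a)⁻¹)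
    (by rwa [ne_eq, mul_inv_eq_one])
  exact exists_notMem_eqLocus_sup f f' K hK

theorem residuallyFinite_vertexSubgroup_insert [Group.ResiduallyFinite (raagVertexSubgroup Γ S)]
    (hv : v ∉ S) : Group.ResiduallyFinite (raagVertexSubgroup Γ (insert v S)) := by
  refine Group.residuallyFinite_iff_forall_finiteIndex.2 fun ⟨g, hg⟩ hall ↦ ?_
  have hall (K : Subgroup (RAAG Γ)) [K.FiniteIndex] : g ∈ K := hall (K.subgroupOf _)
  obtain ⟨D, hD, hDv, hDw⟩ := exists_crossedHom (Γ := Γ) (freeGroupAction _ _) v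
    (FreeGroup.of ((1 : RAAG Γ) : RAAG Γ ⧸ (linkSubgroup Γ v).comap (ret Γ S))) fun w h ↦ by
      simp [freeGroupAction_apply, gen_smul_coe_one (link_le_comap_ret S v) h]
  obtain ⟨Ψ, hΨ⟩ := exists_ret_insert_eq hv hD hDv hDw
  have hret : retCod Γ S g = 1 :=
    Group.eq_one_iff_forall_finiteIndexNormalSubroup _ fun K ↦
      hall (K.comap (retCod Γ S)).toSubgroup
  have hDg : D g = 1 := by
    by_contra h
    obtain ⟨K, _, hgK⟩ := hD.exists_finiteIndex_notMem_of_separable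
      (exists_notMem_comap_ret_sup v) h
    exact hgK (hall K)
  refine Subtype.ext ?_
  calc g = Ψ (D g) * ret Γ S g := by rw [← hΨ, ret_eq_self hg]
    _ = 1 := by rw [hDg, map_one, one_mul]; exact congrArg Subtype.val hret

theorem residuallyFinite_vertexSubgroup_finset (Δ : Finset V) :
    Group.ResiduallyFinite (raagVertexSubgroup Γ (Δ : Set V)) := by
  classical
  induction Δ using Finset.induction_on with
  | empty =>
    have : raagVertexSubgroup Γ ((∅ : Finset V) : Set V) = ⊥ :=
      le_bot_iff.1 (vertexSubgroup_le (by simp))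
    rw [this]
    infer_instance
  | insert v Δ hv ih =>
    rw [Finset.coe_insert]
    exact residuallyFinite_vertexSubgroup_insert (by simpa using hv)

instance residuallyFinite (Γ : SimpleGraph V) : Group.ResiduallyFinite (RAAG Γ) := by
  refine Group.residuallyFinite_iff_forall_finiteIndexNormalSubgroup.2 fun g hg ↦ ?_
  obtain ⟨Δ, hΔ⟩ := exists_mem_vertexSubgroup_finset g
  have := residuallyFinite_vertexSubgroup_finset (Γ := Γ) Δ
  have : retCod Γ (Δ : Set V) g = 1 :=
    Group.eq_one_iff_forall_finiteIndexNormalSubroup _ fun K ↦ hg (K.comap _)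
  exact (ret_eq_self hΔ).symm.trans (congrArg Subtype.val this)

end ResiduallyFinite

section Centralizer

variable {N : Subgroup (RAAG Γ)}

theorem gen_mem_centralizer_of_le_star (hN : N ≤ starSubgroup Γ v) :
    gen Γ v ∈ Subgroup.centralizer (N : Set (RAAG Γ)) := fun _ hn ↦
  (commute_of_mem_vertexSubgroup (S := {v}) (T := star Γ v)
    (by rintro _ rfl w (rfl | hw); exacts [rfl, gen_mul_gen hw]) (gen_mem rfl) (hN hn)).symm

theorem ret_biInter_star_mem_centralizer (hN : N ≤ raagVertexSubgroup Γ S) (g : RAAG Γ) :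
    ret Γ (⋂ v ∈ S, star Γ v) g ∈ Subgroup.centralizer (N : Set (RAAG Γ)) := fun n hn ↦ by
  refine (commute_of_mem_vertexSubgroup (fun v hv w hw ↦ ?_) (hN hn) (ret_mem _ g)).eq
  obtain rfl | h : w ∈ star Γ v := Set.mem_iInter₂.1 hw v hv
  exacts [rfl, gen_mul_gen h]

variable [N.Normal]

theorem gen_mem_centralizer_of_notMem (hN : N ≤ raagVertexSubgroup Γ S) (hv : v ∉ S) :
    gen Γ v ∈ Subgroup.centralizer (N : Set (RAAG Γ)) := fun n hn ↦ by
  have hconj : gen Γ v * n * (gen Γ v)⁻¹ ∈ N := Subgroup.Normal.conj_mem ‹_› n hn _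
  have : gen Γ v * n * (gen Γ v)⁻¹ = n := by
    rw [← ret_eq_self (hN hconj)]
    simp [ret_gen_of_notMem hv, ret_eq_self (hN hn)]
  exact (mul_inv_eq_iff_eq_mul.1 this).symm

theorem finiteIndex_centralizer_mk_gen (hfg : N.FG) {K : Subgroup (RAAG Γ)} [K.Normal]
    (hK : N ⊔ Subgroup.centralizer (N : Set (RAAG Γ)) ≤ K) (v : V) :
    (Subgroup.centralizer {(gen Γ v : RAAG Γ ⧸ K)}).FiniteIndex := by
  by_cases hN : N ≤ starSubgroup Γ v
  · have hv : (gen Γ v : RAAG Γ ⧸ K) = 1 := (QuotientGroup.eq_one_iff _).2 <|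
      hK (Subgroup.mem_sup_right (gen_mem_centralizer_of_le_star hN))
    have htop : Subgroup.centralizer {(gen Γ v : RAAG Γ ⧸ K)} = ⊤ := by simp [hv]
    exact htop ▸ inferInstance
  · have hle : N ⊔ linkSubgroup Γ v ≤
        (Subgroup.centralizer {(gen Γ v : RAAG Γ ⧸ K)}).comap (QuotientGroup.mk' K) := by
      refine sup_le (fun n hn ↦ ?_) fun l hl ↦ ?_
      · have hn : QuotientGroup.mk' K n = 1 :=
          (QuotientGroup.eq_one_iff n).2 (hK (Subgroup.mem_sup_left hn))
        exact Subgroup.mem_comap.2 (hn ▸ one_mem _)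
      · exact Subgroup.mem_centralizer_singleton_iff.2
          ((commute_gen_of_mem_link hl).map (QuotientGroup.mk' K)).eq.symm
    have := finiteIndex_sup_link N hfg hN
    have := Subgroup.finiteIndex_of_le hle
    constructor
    rw [← Subgroup.index_comap_of_surjective _ (QuotientGroup.mk'_surjective K)]
    exact Subgroup.FiniteIndex.index_ne_zero

theorem residuallyFinite_quotient_sup_centralizer (hfg : N.FG) :
    Group.ResiduallyFinite (RAAG Γ ⧸ N ⊔ Subgroup.centralizer (N : Set (RAAG Γ))) := by
  obtain ⟨F, hF⟩ := exists_le_vertexSubgroup_finset hfg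
  set K := N ⊔ Subgroup.centralizer (N : Set (RAAG Γ))
  refine residuallyFinite_of_finiteIndex_centralizer
    (F.finite_toSet.image fun v ↦ (gen Γ v : RAAG Γ ⧸ K)) ?_ ?_
  · refine Subgroup.comap_injective (QuotientGroup.mk'_surjective K) (eq_top_of_gen_mem fun v ↦ ?_)
    refine Subgroup.mem_comap.2 ?_
    by_cases hv : v ∈ (F : Set V)
    · exact Subgroup.subset_closure ⟨v, hv, rfl⟩
    · have hv : QuotientGroup.mk' K (gen Γ v) = 1 := (QuotientGroup.eq_one_iff _).2 <|
        Subgroup.mem_sup_right (gen_mem_centralizer_of_notMem hF hv)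
      exact hv ▸ one_mem _
  · rintro _ ⟨v, -, rfl⟩
    exact finiteIndex_centralizer_mk_gen hfg le_rfl v

end Centralizer

/-! ### Profinite limits of conjugations -/

section ProfiniteLimit

variable {ι : Type*}

-- `J` does not depend on `M`, so that along an ultrafilter a single `h ∈ J` serves all `M` at once.
theorem exists_finite_forall_eq_mul_star {k : ℕ} (hk : 1 ≤ k) {l : RAAG Γ}
    (hl : l ∈ linkSubgroup Γ v) (y : RAAG Γ) : ∃ J : Set (RAAG Γ), J.Finite ∧
      ∀ M : FiniteIndexNormalSubgroup (RAAG Γ), ∃ M' : FiniteIndexNormalSubgroup (RAAG Γ),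
        ∀ u : RAAG Γ,
          ((u * (gen Γ v ^ k * l) : RAAG Γ) : RAAG Γ ⧸ M'.toSubgroup) = (y * u : RAAG Γ) →
          ∃ h ∈ J, ∃ s ∈ starSubgroup Γ v, (u : RAAG Γ ⧸ M.toSubgroup) = (h * s : RAAG Γ) := by
  obtain ⟨J, hJ, hJy⟩ := exists_finite_support_subset_coe_image v y
  refine ⟨J, hJ, fun M ↦ ?_⟩
  obtain ⟨D, hD⟩ := exists_isFoxDerivative (v := v) (ZMod (k + 1))
    (le_sup_left (a := linkSubgroup Γ v) (b := M.toSubgroup))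
  have : (linkSubgroup Γ v ⊔ M.toSubgroup).FiniteIndex := Subgroup.finiteIndex_of_le le_sup_right
  have := hD.finiteIndex_ker
  refine ⟨.ofSubgroup hD.ker.normalCore ⊓ M, fun u hu ↦ ?_⟩
  set x := gen Γ v ^ k * l
  have hmem : (y * u)⁻¹ * (u * x) ∈ hD.ker.normalCore ⊓ M.toSubgroup := QuotientGroup.eq.1 hu.symm
  have hDu : D (u * x) = D (y * u) := by
    rw [← hD.map_mul_of_mem_ker (y * u) (hD.ker.normalCore_le hmem.1), mul_inv_cancel_left]
  obtain ⟨t, ht⟩ := hD.exists_zpow_mul_apply_ne_zero hk hl hDu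
  obtain ⟨h, hhJ, hh⟩ := hJy _ _ D hD _ ht
  obtain ⟨l', hl', m, hm, hlm⟩ := Subgroup.mem_sup_of_normal_right.1 (QuotientGroup.eq.1 hh)
  have hxs : x ∈ starSubgroup Γ v := mul_mem (pow_mem (gen_mem_star v) k) (link_le_star v hl)
  refine ⟨h, hhJ, l' * x ^ (-t), mul_mem (link_le_star v hl') (zpow_mem hxs _), ?_⟩
  have huxy : SemiconjBy (u : RAAG Γ ⧸ M.toSubgroup) x y :=
    (QuotientGroup.eq.2 hmem.2).symm
  have huxt : ((u * x ^ t : RAAG Γ) : RAAG Γ ⧸ M.toSubgroup) = (h * l' : RAAG Γ) := calc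
    ((u * x ^ t : RAAG Γ) : RAAG Γ ⧸ M.toSubgroup) = (y ^ t * u : RAAG Γ) := huxy.zpow_right t
    _ = (h * l' : RAAG Γ) := (QuotientGroup.eq.2 (by simpa [mul_assoc, ← hlm] using hm)).symm
  calc (u : RAAG Γ ⧸ M.toSubgroup) = (u * x ^ t : RAAG Γ) * (x ^ (-t) : RAAG Γ) := by simp
    _ = _ := by rw [huxt, ← QuotientGroup.mk_mul, mul_assoc]

theorem profiniteTendsto_mul_ret_inv {𝓤 : Filter ι} {u : ι → RAAG Γ} {h : RAAG Γ}
    (hu : ∀ M : FiniteIndexNormalSubgroup (RAAG Γ), ∀ᶠ i in 𝓤, ∃ s ∈ raagVertexSubgroup Γ S,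
      (u i : RAAG Γ ⧸ M.toSubgroup) = (h * s : RAAG Γ)) :
    ProfiniteTendsto (fun i ↦ u i * (ret Γ S (u i))⁻¹) 𝓤 (h * (ret Γ S h)⁻¹) := fun M ↦ by
  filter_upwards [hu (M ⊓ M.comap (ret Γ S))] with i ⟨s, hs, hi⟩
  have hmem := QuotientGroup.eq.1 hi
  have hi : (u i : RAAG Γ ⧸ M.toSubgroup) = (h * s : RAAG Γ) := QuotientGroup.eq.2 hmem.1
  have hret : (ret Γ S (u i) : RAAG Γ ⧸ M.toSubgroup) = (ret Γ S h * s : RAAG Γ) := by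
    refine QuotientGroup.eq.2 ?_
    have : ret Γ S ((u i)⁻¹ * (h * s)) ∈ M.toSubgroup := hmem.2
    rwa [map_mul, map_mul, map_inv, ret_eq_self hs] at this
  rw [QuotientGroup.mk_mul, QuotientGroup.mk_inv, hi, hret]
  simp

theorem exists_profiniteTendsto_of_gen_pow_mul {𝓤 : Ultrafilter ι} {u : ι → RAAG Γ}
    {k : ℕ} (hk : 1 ≤ k) {l y : RAAG Γ} (hl : l ∈ linkSubgroup Γ v)
    (hu : ProfiniteTendsto (fun i ↦ u i * (gen Γ v ^ k * l) * (u i)⁻¹) 𝓤 y) :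
    ∃ g, ProfiniteTendsto (fun i ↦ u i * (ret Γ (star Γ v) (u i))⁻¹) 𝓤 g := by
  obtain ⟨J, hJ, hJu⟩ := exists_finite_forall_eq_mul_star hk hl y
  have : Nonempty (FiniteIndexNormalSubgroup (RAAG Γ)) := ⟨.ofSubgroup ⊤⟩
  obtain ⟨h, -, hh⟩ := exists_mem_forall_eventually_of_finite 𝓤 hJ
    (p := fun h (M : FiniteIndexNormalSubgroup (RAAG Γ)) i ↦
      ∃ s ∈ starSubgroup Γ v, (u i : RAAG Γ ⧸ M.toSubgroup) = (h * s : RAAG Γ))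
    (fun h M M' i hle ⟨s, hs, hi⟩ ↦
      ⟨s, hs, QuotientGroup.eq.2 (SetLike.le_def.1 hle (QuotientGroup.eq.1 hi))⟩)
    fun M ↦ by
      obtain ⟨M', hM'⟩ := hJu M
      filter_upwards [hu M'] with i hi
      exact hM' _ (by simpa using congrArg (· * (u i : RAAG Γ ⧸ M'.toSubgroup)) hi)
  exact ⟨_, profiniteTendsto_mul_ret_inv hh⟩

theorem _root_.ProfiniteTendsto.mul_ret_inter_inv {𝓤 : Filter ι} {u : ι → RAAG Γ} {g h : RAAG Γ}
    (hg : ProfiniteTendsto (fun i ↦ u i * (ret Γ S (u i))⁻¹) 𝓤 g)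
    (hh : ProfiniteTendsto (fun i ↦ u i * (ret Γ T (u i))⁻¹) 𝓤 h) :
    ProfiniteTendsto (fun i ↦ u i * (ret Γ (S ∩ T) (u i))⁻¹) 𝓤 (g * ret Γ S h) := by
  simpa [mul_assoc, ret_ret] using hg.mul (hh.map (ret Γ S))

variable {N : Subgroup (RAAG Γ)} [N.Normal] {𝓤 : Ultrafilter ι} {u : ι → RAAG Γ}
  {φ : N → RAAG Γ}

theorem exists_profiniteTendsto_ret_star (hfg : N.FG) (hu : ∀ i, u i ∈ N)
    (hφ : ∀ x : N, ProfiniteTendsto (fun i ↦ u i * x * (u i)⁻¹) 𝓤 (φ x)) (v : V) :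
    ∃ g, ProfiniteTendsto (fun i ↦ u i * (ret Γ (star Γ v) (u i))⁻¹) 𝓤 g := by
  by_cases hN : N ≤ starSubgroup Γ v
  · have hret (i : ι) : u i * (ret Γ (star Γ v) (u i))⁻¹ = 1 := by
      rw [ret_eq_self (hN (hu i)), mul_inv_cancel]
    exact ⟨1, by simpa only [hret] using .const _ 1⟩
  · obtain ⟨k, hk, -, hkN⟩ := Subgroup.exists_pow_mem_of_index_ne_zero
      (finiteIndex_sup_link N hfg hN).index_ne_zero (gen Γ v)
    obtain ⟨n, hn, l, hl, hnl⟩ := Subgroup.mem_sup_of_normal_left.1 hkN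
    obtain rfl : n = gen Γ v ^ k * l⁻¹ := eq_mul_inv_of_mul_eq hnl
    exact exists_profiniteTendsto_of_gen_pow_mul hk (inv_mem hl) (hφ ⟨_, hn⟩)

theorem exists_profiniteTendsto_ret_biInter_star (hfg : N.FG) (hu : ∀ i, u i ∈ N)
    (hφ : ∀ x : N, ProfiniteTendsto (fun i ↦ u i * x * (u i)⁻¹) 𝓤 (φ x)) (F : Finset V) :
    ∃ g, ProfiniteTendsto (fun i ↦ u i * (ret Γ (⋂ v ∈ F, star Γ v) (u i))⁻¹) 𝓤 g := by
  classical
  induction F using Finset.induction_on with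
  | empty =>
    have hret (g : RAAG Γ) : ret Γ Set.univ g = g :=
      DFunLike.congr_fun (g := MonoidHom.id _) (hom_ext fun _ ↦ ret_gen_of_mem trivial) g
    exact ⟨1, by simpa [hret] using .const _ 1⟩
  | insert v F _ ih =>
    obtain ⟨g, hg⟩ := exists_profiniteTendsto_ret_star hfg hu hφ v
    obtain ⟨h, hh⟩ := ih
    exact ⟨_, by simpa [Set.iInter_iInter_eq_or_left] using hg.mul_ret_inter_inv hh⟩

theorem exists_forall_eq_conj_of_profiniteTendsto (hfg : N.FG) (hu : ∀ i, u i ∈ N)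
    (hφ : ∀ x : N, ProfiniteTendsto (fun i ↦ u i * x * (u i)⁻¹) 𝓤 (φ x)) :
    ∃ n ∈ N, ∀ x : N, φ x = n * x * n⁻¹ := by
  obtain ⟨F, hF⟩ := exists_le_vertexSubgroup_finset hfg
  obtain ⟨g, hg⟩ := exists_profiniteTendsto_ret_biInter_star hfg hu hφ F
  have hret (i : ι) := ret_biInter_star_mem_centralizer hF (u i)
  have hφ_eq (x : N) : φ x = g * x * g⁻¹ :=
    (hφ x).eq_conj_of_mul_inv hg fun i ↦ hret i x x.2
  have hgK : (g : RAAG Γ ⧸ N ⊔ Subgroup.centralizer (N : Set (RAAG Γ))) = 1 := by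
    have := residuallyFinite_quotient_sup_centralizer hfg
    exact hg.map_eq_one (QuotientGroup.mk' _) fun i ↦ (QuotientGroup.eq_one_iff _).2 <|
      mul_mem (Subgroup.mem_sup_left (hu i)) (Subgroup.mem_sup_right (inv_mem (hret i)))
  obtain ⟨n, hn, z, hz, rfl⟩ :=
    Subgroup.mem_sup_of_normal_left.1 ((QuotientGroup.eq_one_iff g).1 hgK)
  refine ⟨n, hn, fun x ↦ ?_⟩
  rw [hφ_eq, mul_assoc n z x, ← hz x x.2]
  group

end ProfiniteLimit

end RAAG

theorem out_of_fg_full_normal_subgroup_of_RAAG_is_residually_finite_general {V : Type}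
    (Γ : SimpleGraph V) (N : Subgroup (RAAG Γ)) [N.Normal] (hfg : N.FG) :
    ResiduallyFinite (OutAut ↥N) := by
  have : Group.FG N := (Group.fg_iff_subgroup_fg N).2 hfg
  refine residuallyFinite_outAut_of_profiniteTendsto fun φ 𝓤 u hφ ↦ ?_
  obtain ⟨n, hn, hnφ⟩ := RAAG.exists_forall_eq_conj_of_profiniteTendsto hfg
    (fun M ↦ (u M).2) fun x ↦ (hφ x).map N.subtype
  exact ⟨⟨n, hn⟩, MulEquiv.ext fun x ↦ Subtype.ext (hnφ x).symm⟩

theorem out_of_fg_full_normal_subgroup_of_RAAG_is_residually_finite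
    {V : Type} [Fintype V] (Γ : SimpleGraph V)
    (N : Subgroup (RAAG Γ)) [N.Normal]
    (hfg : N.FG) (hfull : IsFullSubgroup Γ N) :
    ResiduallyFinite (OutAut ↥N) :=
  out_of_fg_full_normal_subgroup_of_RAAG_is_residually_finite_general Γ N hfg
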